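/- Let occ(σ) be the number of occurrences in σ of the mesh pattern Nr. 28, where an occurrence is a pair of indices i < j with a = σ_i < σ_j = b such that: every element before position i has value greater than b; every element strictly between positions i and j has value strictly between a and b; and every element after position j has value less than a. Let E(t,u) = Σ_{n≥0} t^n Σ_{σ∈K_n} u^{occ(σ)}. Then ((1+t)^2 + t^2(1−u)·A(t)·(A(t)−1−t))·E(t,u) = (1+t)^2·A(t) as formal power series in t over ℚ[u]. -/

import Mathlib

/-- A permutation of `{0, …, n-1}` is a *king permutation* if consecutive entries
differ by more than 1 in absolute value. -/
def IsKing {n : ℕ} (σ : Equiv.Perm (Fin n)) : Prop :=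
  ∀ i : Fin n, ∀ h : (i : ℕ) + 1 < n,
    1 < |((σ ⟨(i : ℕ) + 1, h⟩ : ℕ) : ℤ) - ((σ i : ℕ) : ℤ)|

/-- `kingCount n = A_n`, the number of king permutations of length `n`. -/
noncomputable def kingCount (n : ℕ) : ℕ :=
  Nat.card {σ : Equiv.Perm (Fin n) // IsKing σ}

/-- `A(t)` regarded as a power series over `ℚ[u]` (constant-polynomial coefficients). -/
noncomputable def kingAu : PowerSeries (Polynomial ℚ) :=
  PowerSeries.mk fun n => (kingCount n : Polynomial ℚ)

/-- `u` viewed as a constant power series over `ℚ[u]`. -/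
noncomputable def U : PowerSeries (Polynomial ℚ) :=
  PowerSeries.C (R := Polynomial ℚ) Polynomial.X

/-- `t`, the power series variable. -/
noncomputable def T : PowerSeries (Polynomial ℚ) :=
  PowerSeries.X

/-- An occurrence of the mesh pattern Nr. 28 in `σ`. -/
def OccP {n : ℕ} (σ : Equiv.Perm (Fin n)) (i j : Fin n) : Prop :=
  i < j ∧ σ i < σ j ∧
    (∀ k : Fin n, k < i → σ j < σ k) ∧
    (∀ k : Fin n, i < k → k < j → σ i < σ k ∧ σ k < σ j) ∧
    (∀ k : Fin n, j < k → σ k < σ i)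

/-- The number of occurrences of the mesh pattern Nr. 28 in `σ`. -/
noncomputable def occP {n : ℕ} (σ : Equiv.Perm (Fin n)) : ℕ :=
  Nat.card {p : Fin n × Fin n // OccP σ p.1 p.2}

-- `E(t,u) = Σ_{n≥0} t^n Σ_{σ∈K_n} u^{occ(σ)}`, a power series in `t` over `ℚ[u]`.
open Classical in
noncomputable def Etu : PowerSeries (Polynomial ℚ) :=
  PowerSeries.mk fun n =>
    ∑ σ : Equiv.Perm (Fin n),
      if IsKing σ then (Polynomial.X : Polynomial ℚ) ^ occP σ else 0

/-!
An occurrence `(i, j)` of the pattern in `σ` is the same as a decomposition `σ = α ⊖ μ ⊖ β` in which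
the *block* `μ = σ_i ⋯ σ_j` begins with its minimum and ends with its maximum. Such a skew sum is a
king permutation as soon as its three summands are. Expand `u ^ k = 1 + (u - 1) ∑_{i < k} u ^ i`,
where the `i`-th term marks an occurrence with exactly `i` occurrences to its right, that is, in
`β`: with `B` the generating function of the king blocks this says `E = A + (u - 1) A B E`. Finally,
every king permutation that begins with its minimum arises by prepending a minimum to one that does
not, and likewise for a maximum at the end, so that `(1 + t) ^ 2 B = t ^ 2 (A - 1 - t)`.
-/

open Finset in
theorem sum_card_filter_lt {α M : Type*} [LinearOrder α] [AddCommMonoid M] (s : Finset α)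
    (f : ℕ → M) : ∑ b ∈ s, f #{a ∈ s | a < b} = ∑ i ∈ range #s, f i := by
  induction s using Finset.induction_on_max with
  | empty => simp
  | insert a s hs ih =>
    have ha : a ∉ s := fun h => lt_irrefl a (hs a h)
    rw [sum_insert ha, card_insert_of_notMem ha, sum_range_succ, add_comm, ← ih]
    congr 1
    · refine sum_congr rfl fun b hb => ?_
      rw [filter_insert, if_neg (hs b hb).not_gt]
    · rw [filter_insert, if_neg (lt_irrefl a), filter_true_of_mem hs]

open Finset in
theorem pow_card_eq_one_add_sum {α R : Type*} [LinearOrder α] [CommRing R] (s : Finset α) (u : R) :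
    u ^ #s = 1 + (u - 1) * ∑ b ∈ s, u ^ #{a ∈ s | a < b} := by
  rw [sum_card_filter_lt s (u ^ ·), mul_geom_sum]
  ring

/-! ### Permutations under skew sum -/

/-- A permutation of `{0, …, length - 1}` of unspecified length. Collecting all lengths in one type
makes the skew sum an honest (associative) multiplication. -/
structure FinPerm where
  /-- The number of letters of the permutation. -/
  length : ℕ
  /-- The underlying permutation. -/
  perm : Equiv.Perm (Fin length)

namespace FinPerm

open Finset PowerSeries

/-- The one-line notation of a permutation as a function on `ℕ`, with junk value `0` outside
`{0, …, length - 1}`. -/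
def entry (σ : FinPerm) (k : ℕ) : ℕ :=
  if h : k < σ.length then σ.perm ⟨k, h⟩ else 0

instance : CoeFun FinPerm fun _ => ℕ → ℕ := ⟨entry⟩

variable {σ τ α β γ δ μ : FinPerm} {j k m n v : ℕ}

theorem apply_of_lt (h : k < σ.length) : σ k = σ.perm ⟨k, h⟩ := dif_pos h

theorem perm_apply (i : Fin σ.length) : (σ.perm i : ℕ) = σ i := (apply_of_lt i.2).symm

theorem apply_lt (h : k < σ.length) : σ k < σ.length :=
  apply_of_lt h ▸ (σ.perm ⟨k, h⟩).2

theorem apply_inj (hj : j < σ.length) (hk : k < σ.length) : σ j = σ k ↔ j = k := by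
  rw [apply_of_lt hj, apply_of_lt hk, Fin.val_inj, σ.perm.injective.eq_iff, Fin.mk.injEq]

theorem injOn (σ : FinPerm) : Set.InjOn σ (Set.Iio σ.length) :=
  fun _ hj _ hk => (apply_inj hj hk).1

theorem exists_apply_eq (hv : v < σ.length) : ∃ k < σ.length, σ k = v :=
  ⟨σ.perm.symm ⟨v, hv⟩, Fin.is_lt _, by rw [← perm_apply, Equiv.apply_symm_apply]⟩

theorem ext_apply (hl : σ.length = τ.length) (h : ∀ k < σ.length, σ k = τ k) : σ = τ := by
  obtain ⟨m, σ⟩ := σ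
  obtain ⟨n, τ⟩ := τ
  obtain rfl : m = n := hl
  congr 1
  ext i
  simpa only [← perm_apply] using h i i.2

/-- The permutation of length `n` whose one-line notation is `f 0, …, f (n - 1)`. -/
noncomputable def ofFun (n : ℕ) (f : ℕ → ℕ) (hlt : ∀ k < n, f k < n)
    (hinj : Set.InjOn f (Set.Iio n)) : FinPerm where
  length := n
  perm := Equiv.ofBijective (fun i => ⟨f i, hlt i i.2⟩) <| Finite.injective_iff_bijective.1
    fun i j h => Fin.ext <| hinj i.2 j.2 <| congrArg Fin.val h

theorem ofFun_apply {f : ℕ → ℕ} {hlt : ∀ k < n, f k < n} {hinj : Set.InjOn f (Set.Iio n)}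
    (hk : k < n) : ofFun n f hlt hinj k = f k :=
  dif_pos hk

/-- The skew sum `α ⊖ β`: the letters of `α`, raised above those of `β`, followed by `β`. -/
noncomputable instance : Mul FinPerm where
  mul α β := ofFun (α.length + β.length)
    (fun k => if k < α.length then α k + β.length else β (k - α.length))
    (fun k hk => by
      split_ifs with h
      · have := apply_lt h
        omega
      · have := apply_lt (σ := β) (k := k - α.length) (by omega)
        omega)
    (fun j hj k hk h => by
      simp only [Set.mem_Iio] at hj hk
      have hα := apply_inj (σ := α) (j := j) (k := k)
      have hβ := apply_inj (σ := β) (j := j - α.length) (k := k - α.length)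
      have hj' := apply_lt (σ := β) (k := j - α.length)
      have hk' := apply_lt (σ := β) (k := k - α.length)
      dsimp only at h
      split_ifs at h <;> omega)

theorem length_mul (α β : FinPerm) : (α * β).length = α.length + β.length := rfl

theorem mul_apply_left (h : k < α.length) : (α * β) k = α k + β.length :=
  (ofFun_apply (by omega)).trans (if_pos h)

theorem mul_apply_right (h : k < β.length) : (α * β) (α.length + k) = β k := by
  refine (ofFun_apply (by omega)).trans ?_
  rw [if_neg (by omega), Nat.add_sub_cancel_left]

theorem eq_mul_iff : σ = α * β ↔ σ.length = α.length + β.length ∧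
    (∀ k < α.length, σ k = α k + β.length) ∧ ∀ k < β.length, σ (α.length + k) = β k := by
  constructor
  · rintro rfl
    exact ⟨rfl, fun _ => mul_apply_left, fun _ => mul_apply_right⟩
  · rintro ⟨hl, hα, hβ⟩
    refine ext_apply hl fun k hk => ?_
    obtain h | ⟨j, rfl⟩ := (lt_or_ge k α.length).imp_right Nat.exists_eq_add_of_le
    · rw [hα k h, mul_apply_left h]
    · rw [hβ j (by omega), mul_apply_right (by omega)]

noncomputable instance : Semigroup FinPerm where
  mul_assoc α β γ := by
    refine eq_mul_iff.2 ⟨add_assoc _ _ _, fun k hk => ?_, fun k hk => ?_⟩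
    · rw [mul_apply_left (by rw [length_mul]; omega), mul_apply_left hk, length_mul, add_assoc]
    · obtain h | ⟨j, rfl⟩ := (lt_or_ge k β.length).imp_right Nat.exists_eq_add_of_le
      · rw [mul_apply_left (by simpa only [length_mul, Nat.add_lt_add_iff_left]),
          mul_apply_right h, mul_apply_left h]
      · rw [length_mul, Nat.add_lt_add_iff_left] at hk
        rw [← add_assoc, ← length_mul, mul_apply_right hk, mul_apply_right hk]

theorem mul_inj_of_length_eq (h : α * β = γ * δ) (hl : β.length = δ.length) :
    α = γ ∧ β = δ := by
  obtain ⟨h₀, h₁, h₂⟩ := eq_mul_iff.1 h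
  rw [length_mul, hl, Nat.add_right_cancel_iff] at h₀
  constructor
  · refine ext_apply h₀ fun k hk => ?_
    have := h₁ k (h₀ ▸ hk)
    rw [mul_apply_left hk] at this
    omega
  · refine ext_apply hl fun k hk => ?_
    rw [← h₂ k (hl ▸ hk), ← h₀, mul_apply_right hk]

theorem card_le_of_forall_apply_lt {s : Finset ℕ} (hs : ∀ k ∈ s, k < σ.length)
    (hv : ∀ k ∈ s, σ k < v) : #s ≤ v := by
  rw [← card_range v]
  exact card_le_card_of_injOn σ (fun k hk => by simpa using hv k hk) (σ.injOn.mono hs)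

theorem add_card_lt_of_forall_lt_apply {s : Finset ℕ} (hs : ∀ k ∈ s, k < σ.length)
    (hvσ : v < σ.length) (hv : ∀ k ∈ s, v < σ k) : v + #s < σ.length := by
  have hcard : #s ≤ #(Ioo v σ.length) :=
    card_le_card_of_injOn σ (fun k hk => by simpa using ⟨hv k hk, apply_lt (hs k hk)⟩)
      (σ.injOn.mono hs)
  rw [Nat.card_Ioo] at hcard
  omega

theorem exists_eq_mul (hk : k ≤ σ.length) (h : ∀ p < k, ∀ q < σ.length, k ≤ q → σ q < σ p) :
    ∃ α β, α.length = k ∧ σ = α * β := by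
  have high : ∀ p < k, σ.length - k ≤ σ p := fun p hp => by
    rw [← Nat.card_Ico]
    exact card_le_of_forall_apply_lt (fun q hq => (mem_Ico.1 hq).2)
      fun q hq => h p hp q (mem_Ico.1 hq).2 (mem_Ico.1 hq).1
  have low : ∀ q < σ.length, k ≤ q → σ q < σ.length - k := fun q hq hkq => by
    have := add_card_lt_of_forall_lt_apply (s := range k)
      (fun p hp => (mem_range.1 hp).trans_le hk) (apply_lt hq)
      fun p hp => h p (mem_range.1 hp) q hq hkq
    rw [card_range] at this
    omega
  let α := ofFun k (fun p => σ p - (σ.length - k))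
    (fun p hp => by
      have := apply_lt (hp.trans_le hk)
      omega)
    (fun p hp q hq hpq => σ.injOn (hp.trans_le hk) (hq.trans_le hk) <| by
      have := high p hp
      have := high q hq
      dsimp only at hpq
      omega)
  let β := ofFun (σ.length - k) (fun q => σ (k + q))
    (fun q hq => low (k + q) (by omega) (by omega))
    (fun p hp q hq hpq => by
      simp only [Set.mem_Iio] at hp hq
      exact Nat.add_left_cancel ((apply_inj (by omega) (by omega)).1 hpq))
  have hα : ∀ p < k, α p = σ p - (σ.length - k) := fun p hp => ofFun_apply hp
  have hβ : ∀ q < σ.length - k, β q = σ (k + q) := fun q hq => ofFun_apply hq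
  refine ⟨α, β, rfl, eq_mul_iff.2 ⟨(Nat.add_sub_of_le hk).symm, fun p hp => ?_, fun q hq => ?_⟩⟩
  · rw [hα p hp]
    exact (Nat.sub_add_cancel (high p hp)).symm
  · exact (hβ q hq).symm

/-- Levi's lemma for the semigroup of permutations under skew sum. -/
theorem exists_of_mul_eq_mul (h : α * β = γ * δ) (hl : δ.length ≤ β.length) :
    ∃ ε, β = ε * δ ∧ γ = α * ε := by
  obtain ⟨hlen, -, -⟩ := eq_mul_iff.1 h
  rw [length_mul] at hlen
  obtain ⟨α', ε, hα', rfl⟩ : ∃ α' ε, α'.length = α.length ∧ γ = α' * ε := by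
    refine exists_eq_mul (by omega) fun p hp q hq hpq => ?_
    obtain ⟨j, rfl⟩ := Nat.exists_eq_add_of_le hpq
    have hγp : γ p + δ.length = α p + β.length := by
      rw [← mul_apply_left (by omega), ← h, mul_apply_left hp]
    have hγq : γ (α.length + j) + δ.length = β j := by
      rw [← mul_apply_left hq, ← h, mul_apply_right (by omega)]
    have := apply_lt (σ := β) (k := j) (by omega)
    omega
  rw [mul_assoc] at h
  obtain ⟨rfl, rfl⟩ := mul_inj_of_length_eq h (by
    rw [length_mul] at hlen ⊢
    omega)
  exact ⟨ε, rfl, rfl⟩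

/-! ### King permutations and blocks -/

/-- The king permutations of all lengths. -/
def kings : Set FinPerm := {σ | IsKing σ.perm}

theorem mem_kings_iff : σ ∈ kings ↔
    ∀ k, k + 1 < σ.length → σ k + 1 < σ (k + 1) ∨ σ (k + 1) + 1 < σ k := by
  simp only [kings, Set.mem_ofPred_eq, IsKing, perm_apply, lt_abs, Fin.forall_iff]
  exact forall_congr' fun k => ⟨fun h hk => by have := h (by omega) hk; omega,
    fun h _ hk => by have := h hk; omega⟩

theorem mul_mem_kings_iff
    (h : 0 < α.length → 0 < β.length → β 0 + 1 < α (α.length - 1) + β.length) :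
    α * β ∈ kings ↔ α ∈ kings ∧ β ∈ kings := by
  simp only [mem_kings_iff, length_mul]
  constructor
  · refine fun H => ⟨fun k hk => ?_, fun k hk => ?_⟩
    · have := H k (by omega)
      rw [mul_apply_left hk, mul_apply_left (by omega)] at this
      omega
    · have := H (α.length + k) (by omega)
      rwa [add_assoc, mul_apply_right hk, mul_apply_right (by omega)] at this
  · rintro ⟨hα, hβ⟩ k hk
    obtain hlt | heq | hgt := lt_trichotomy (k + 1) α.length
    · rw [mul_apply_left hlt, mul_apply_left (by omega)]
      have := hα k hlt
      omega
    · have hjunction := h (by omega) (by omega)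
      rw [← heq, Nat.add_sub_cancel] at hjunction
      have hright := mul_apply_right (α := α) (β := β) (k := 0) (by omega)
      rw [add_zero, ← heq] at hright
      rw [mul_apply_left (by omega), hright]
      omega
    · obtain ⟨j, rfl⟩ := Nat.exists_eq_add_of_le (Nat.lt_succ_iff.1 hgt)
      rw [add_assoc, mul_apply_right (by omega), mul_apply_right (by omega)]
      exact hβ j (by omega)

/-- The permutations of length at least two that begin with their minimum and end with their
maximum: the standardizations of the stretch `σ_i ⋯ σ_j` of an occurrence `(i, j)`. -/
def blocks : Set FinPerm := {μ | 1 < μ.length ∧ μ 0 = 0 ∧ μ (μ.length - 1) = μ.length - 1}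

/-- The skew sums whose last summand is a block: the standardizations of the prefix `σ_1 ⋯ σ_j` for
an occurrence `(i, j)`. -/
def endingInBlock : Set FinPerm := {γ | ∃ α, ∃ μ ∈ blocks, γ = α * μ}

theorem mul_mem_kings_iff_of_mem_blocks (hμ : μ ∈ blocks) :
    α * μ ∈ kings ↔ α ∈ kings ∧ μ ∈ kings := by
  obtain ⟨hlen, hzero, -⟩ := hμ
  exact mul_mem_kings_iff fun _ _ => by omega

theorem mul_mem_kings_iff_of_mem_endingInBlock (hγ : γ ∈ endingInBlock) :
    γ * β ∈ kings ↔ γ ∈ kings ∧ β ∈ kings := by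
  obtain ⟨α, μ, ⟨hlen, -, hlast⟩, rfl⟩ := hγ
  refine mul_mem_kings_iff fun _ hβ => ?_
  rw [length_mul, Nat.add_sub_assoc hlen.le, mul_apply_right (by omega), hlast]
  have := apply_lt hβ
  omega

theorem length_le_of_mul_eq_mul (h : α * μ = γ * δ) (hμ : μ ∈ blocks) (hδ : 0 < δ.length) :
    μ.length ≤ δ.length := by
  obtain ⟨hlen, hzero, -⟩ := hμ
  by_contra! hlt
  have hl : α.length + μ.length = γ.length + δ.length := congrArg length h
  have hμ₀ : (α * μ) (α.length + 0) = 0 := by rw [mul_apply_right (by omega), hzero]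
  rw [h, add_zero, mul_apply_left (by omega)] at hμ₀
  omega

theorem mul_inj_of_mem_blocks (h : α * μ = γ * δ) (hμ : μ ∈ blocks) (hδ : δ ∈ blocks) :
    α = γ ∧ μ = δ :=
  mul_inj_of_length_eq h <| le_antisymm
    (length_le_of_mul_eq_mul h hμ (Nat.zero_lt_of_lt hδ.1))
    (length_le_of_mul_eq_mul h.symm hδ (Nat.zero_lt_of_lt hμ.1))

open Classical in
/-- The lengths of the summands `β` in the decompositions `σ = α ⊖ μ ⊖ β` with `μ` a block. They
stand for the occurrences of the pattern in `σ`. -/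
noncomputable def cuts (σ : FinPerm) : Finset ℕ :=
  {b ∈ range σ.length | ∃ γ ∈ endingInBlock, ∃ β, β.length = b ∧ σ = γ * β}

theorem length_pos_of_mem_endingInBlock (hγ : γ ∈ endingInBlock) : 0 < γ.length := by
  obtain ⟨α, μ, hμ, rfl⟩ := hγ
  exact Nat.add_pos_right _ (Nat.zero_lt_of_lt hμ.1)

theorem mem_cuts : m ∈ cuts σ ↔ ∃ γ ∈ endingInBlock, ∃ β, β.length = m ∧ σ = γ * β := by
  simp only [cuts, mem_filter, mem_range, and_iff_right_iff_imp]
  rintro ⟨γ, hγ, β, rfl, rfl⟩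
  exact Nat.lt_add_of_pos_left (length_pos_of_mem_endingInBlock hγ)

theorem mul_mem_endingInBlock (hγ : γ ∈ endingInBlock) : α * γ ∈ endingInBlock := by
  obtain ⟨β, μ, hμ, rfl⟩ := hγ
  exact ⟨α * β, μ, hμ, (mul_assoc _ _ _).symm⟩

theorem right_mem_endingInBlock (h : γ * δ ∈ endingInBlock) (hδ : 0 < δ.length) :
    δ ∈ endingInBlock := by
  obtain ⟨α, μ, hμ, h⟩ := h
  obtain ⟨ε, rfl, -⟩ := exists_of_mul_eq_mul h (length_le_of_mul_eq_mul h.symm hμ hδ)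
  exact ⟨ε, μ, hμ, rfl⟩

theorem filter_cuts_mul (γ β : FinPerm) : {b ∈ cuts (γ * β) | b < β.length} = cuts β := by
  ext b
  rw [mem_filter, mem_cuts, mem_cuts]
  constructor
  · rintro ⟨⟨γ', hγ', β', rfl, h⟩, hlt⟩
    obtain ⟨ε, rfl, rfl⟩ := exists_of_mul_eq_mul h hlt.le
    exact ⟨ε, right_mem_endingInBlock hγ' (by rw [length_mul] at hlt; omega), β', rfl, rfl⟩
  · rintro ⟨γ', hγ', β', rfl, rfl⟩
    exact ⟨⟨γ * γ', mul_mem_endingInBlock hγ', β', rfl, (mul_assoc _ _ _).symm⟩,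
      Nat.lt_add_of_pos_left (length_pos_of_mem_endingInBlock hγ')⟩

/-! ### Occurrences as decompositions -/

theorem mem_blocks_of_forall_le (hlen : 1 < μ.length) (hmin : ∀ k < μ.length, μ 0 ≤ μ k)
    (hmax : ∀ k < μ.length, μ k ≤ μ (μ.length - 1)) : μ ∈ blocks := by
  refine ⟨hlen, ?_, ?_⟩
  · obtain ⟨k, hk, hk₀⟩ := exists_apply_eq (σ := μ) (v := 0) (by omega)
    have := hmin k hk
    omega
  · obtain ⟨k, hk, hk₁⟩ := exists_apply_eq (σ := μ) (v := μ.length - 1) (by omega)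
    have := hmax k hk
    have := apply_lt (σ := μ) (k := μ.length - 1) (by omega)
    omega

theorem occP_iff {i j : Fin σ.length} : OccP σ.perm i j ↔ (i : ℕ) < j ∧ σ i < σ j ∧
    (∀ k < σ.length, k < i → σ j < σ k) ∧
    (∀ k < σ.length, i < k → k < j → σ i < σ k ∧ σ k < σ j) ∧
    ∀ k < σ.length, j < k → σ k < σ i := by
  simp only [OccP, Fin.lt_def, perm_apply, Fin.forall_iff]

theorem apply_le_of_occP {i j : Fin σ.length} (h : OccP σ.perm i j) (hkj : k ≤ j) :
    σ i ≤ σ k := by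
  obtain ⟨-, hlt, hbefore, hbetween, -⟩ := occP_iff.1 h
  have hk := hkj.trans_lt j.2
  obtain hki | rfl | hik := lt_trichotomy k i
  · exact (hlt.trans (hbefore k hk hki)).le
  · exact le_rfl
  · obtain rfl | hkj := hkj.eq_or_lt
    · exact hlt.le
    · exact (hbetween k hk hik hkj).1.le

theorem le_apply_of_occP {i j : Fin σ.length} (h : OccP σ.perm i j) (hik : i ≤ k)
    (hk : k < σ.length) : σ k ≤ σ j := by
  obtain ⟨-, hlt, -, hbetween, hafter⟩ := occP_iff.1 h
  obtain hkj | rfl | hjk := lt_trichotomy k j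
  · obtain rfl | hik := hik.eq_or_lt
    · exact hlt.le
    · exact (hbetween k hk hik hkj).2.le
  · exact le_rfl
  · exact ((hafter k hk hjk).trans hlt).le

theorem exists_eq_mul_of_occP {i j : Fin σ.length} (h : OccP σ.perm i j) :
    ∃ γ ∈ endingInBlock, ∃ β, β.length = σ.length - 1 - j ∧ σ = γ * β := by
  obtain ⟨hij, -, hbefore, -, hafter⟩ := occP_iff.1 h
  obtain ⟨γ, β, hγ, hσ⟩ := exists_eq_mul (σ := σ) (k := j + 1) j.2 fun p hp q hq hpq =>
    (hafter q hq hpq).trans_le (apply_le_of_occP h (Nat.le_of_lt_succ hp))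
  have hlen : σ.length = γ.length + β.length := congrArg length hσ
  have hσγ : ∀ p < γ.length, σ p = γ p + β.length := fun p hp => hσ ▸ mul_apply_left hp
  obtain ⟨α, μ, hα, rfl⟩ := exists_eq_mul (σ := γ) (k := i) (by omega) fun p hp q hq hpq => by
    have := hσγ p (by omega)
    have := hσγ q hq
    have := hbefore p (by omega) hp
    have := le_apply_of_occP h hpq (by omega)
    omega
  rw [length_mul, hα] at hγ hlen
  have hσμ : ∀ p < μ.length, σ (i + p) = μ p + β.length := fun p hp => by
    rw [← hα, hσγ _ (Nat.add_lt_add_left hp _), mul_apply_right hp]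
  have hfirst : σ i = μ 0 + β.length := hσμ 0 (by omega)
  have hlast : σ j = μ (μ.length - 1) + β.length := by
    rw [← hσμ _ (by omega)]
    congr 1
    omega
  have hμ : μ ∈ blocks := by
    refine mem_blocks_of_forall_le (by omega) (fun k hk => ?_) fun k hk => ?_
    · have := apply_le_of_occP h (k := i + k) (by omega)
      have := hσμ k hk
      omega
    · have := le_apply_of_occP h (k := i + k) (by omega) (by omega)
      have := hσμ k hk
      omega
  exact ⟨α * μ, ⟨α, μ, hμ, rfl⟩, β, by omega, hσ⟩

theorem occP_mul_mul (hμ : μ ∈ blocks) {i j : Fin (α * μ * β).length} (hi : (i : ℕ) = α.length)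
    (hj : (j : ℕ) = α.length + (μ.length - 1)) : OccP (α * μ * β).perm i j := by
  obtain ⟨hlen, hzero, hlast⟩ := hμ
  have hα : ∀ k < α.length, (α * μ * β) k = α k + μ.length + β.length := fun k hk => by
    rw [mul_apply_left (by rw [length_mul]; omega), mul_apply_left hk]
  have hμ : ∀ k < μ.length, (α * μ * β) (α.length + k) = μ k + β.length := fun k hk => by
    rw [mul_apply_left (by rw [length_mul]; omega), mul_apply_right hk]
  have hβ : ∀ k < β.length, (α * μ * β) (α.length + μ.length + k) = β k := fun k hk =>
    mul_apply_right hk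
  have hi' : (α * μ * β) i = β.length := by
    rw [hi, ← add_zero α.length, hμ 0 (by omega), hzero, zero_add]
  have hj' : (α * μ * β) j = μ.length - 1 + β.length := by rw [hj, hμ _ (by omega), hlast]
  rw [occP_iff, hi', hj', hi, hj, length_mul, length_mul]
  refine ⟨by omega, by omega, fun k _ hk => ?_, fun k _ hk hk' => ?_, fun k hk hk' => ?_⟩
  · rw [hα k hk]
    omega
  · obtain ⟨p, rfl⟩ := Nat.exists_eq_add_of_le hk.le
    have hp₀ := apply_inj (σ := μ) (j := p) (k := 0) (by omega) (by omega)
    have hp₁ := apply_inj (σ := μ) (j := p) (k := μ.length - 1) (by omega) (by omega)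
    have := apply_lt (σ := μ) (k := p) (by omega)
    rw [hμ p (by omega)]
    omega
  · obtain ⟨p, rfl⟩ := Nat.exists_eq_add_of_le (show α.length + μ.length ≤ k by omega)
    rw [hβ p (by omega)]
    exact apply_lt (by omega)

theorem eq_of_occP_of_occP {i i' j : Fin σ.length} (h : OccP σ.perm i j) (h' : OccP σ.perm i' j) :
    i = i' := by
  obtain ⟨-, hlt, hbefore, -⟩ := h
  obtain ⟨-, hlt', hbefore', -⟩ := h'
  obtain hii' | rfl | hii' := lt_trichotomy i i'
  · exact absurd (hbefore' i hii') hlt.not_gt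
  · rfl
  · exact absurd (hbefore i' hii') hlt'.not_gt

theorem occP_perm_eq_card_cuts (σ : FinPerm) : occP σ.perm = #(cuts σ) := by
  classical
  rw [occP, Nat.card_eq_fintype_card, Fintype.card_subtype]
  refine card_nbij (fun p => σ.length - 1 - p.2) ?_ ?_ ?_
  · rintro ⟨i, j⟩ h
    exact mem_cuts.2 (exists_eq_mul_of_occP (by simpa using h))
  · rintro ⟨i, j⟩ h ⟨i', j'⟩ h' heq
    simp only [coe_filter, mem_univ, true_and, Set.mem_ofPred_eq] at h h' heq
    obtain rfl : j = j' := by omega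
    rw [eq_of_occP_of_occP h h']
  · intro b hb
    obtain ⟨_, ⟨α, μ, hμ, rfl⟩, β, rfl, rfl⟩ := mem_cuts.1 hb
    have hlen := hμ.1
    let i : Fin (α * μ * β).length := ⟨α.length, by simp only [length_mul]; omega⟩
    let j : Fin (α * μ * β).length :=
      ⟨α.length + (μ.length - 1), by simp only [length_mul]; omega⟩
    refine ⟨(i, j), mem_filter.2 ⟨mem_univ _, occP_mul_mul hμ rfl rfl⟩, ?_⟩
    simp only [length_mul, j]
    omega

/-! ### Generating functions -/

open Classical in
/-- The members of length `n` of a class of permutations. -/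
noncomputable def ofLength (S : Set FinPerm) (n : ℕ) : Finset FinPerm :=
  {σ ∈ univ.map ⟨mk n, fun _ _ h => eq_of_heq (mk.inj h).2⟩ | σ ∈ S}

variable {S S' : Set FinPerm}

theorem mem_ofLength : σ ∈ ofLength S n ↔ σ.length = n ∧ σ ∈ S := by
  simp only [ofLength, mem_filter, mem_map, mem_univ, true_and]
  refine and_congr_left' ⟨?_, ?_⟩
  · rintro ⟨_, rfl⟩
    rfl
  · rintro rfl
    exact ⟨σ.perm, rfl⟩

theorem pairwiseDisjoint_ofLength_product (S S' : Set FinPerm) (s : Set (ℕ × ℕ)) :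
    s.PairwiseDisjoint fun k => ofLength S k.1 ×ˢ ofLength S' k.2 := by
  rintro ⟨a, b⟩ - ⟨c, d⟩ - hne
  refine disjoint_left.2 fun p hp hp' => hne ?_
  simp only [mem_product, mem_ofLength] at hp hp'
  rw [← hp.1.1, ← hp.2.1, hp'.1.1, hp'.2.1]

/-- The pairs of total length `n` of permutations from two given classes. -/
noncomputable def pairsOfLength (S S' : Set FinPerm) (n : ℕ) : Finset (FinPerm × FinPerm) :=
  (antidiagonal n).disjiUnion (fun k => ofLength S k.1 ×ˢ ofLength S' k.2)
    (pairwiseDisjoint_ofLength_product S S' _)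

theorem mk_mem_pairsOfLength :
    (α, β) ∈ pairsOfLength S S' n ↔ (α * β).length = n ∧ α ∈ S ∧ β ∈ S' := by
  simp only [pairsOfLength, mem_disjiUnion, HasAntidiagonal.mem_antidiagonal, mem_product,
    mem_ofLength, length_mul, Prod.exists]
  constructor
  · rintro ⟨_, _, hn, ⟨rfl, hα⟩, rfl, hβ⟩
    exact ⟨hn, hα, hβ⟩
  · rintro ⟨hn, hα, hβ⟩
    exact ⟨_, _, hn, ⟨rfl, hα⟩, rfl, hβ⟩

section Semiring

variable {R : Type*} [Semiring R]

/-- The generating function `∑_{σ ∈ S} w(σ) t^|σ|` of a class `S` of permutations with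
weights `w`. -/
noncomputable def genFun (S : Set FinPerm) (w : FinPerm → R) : R⟦X⟧ :=
  PowerSeries.mk fun n => ∑ σ ∈ ofLength S n, w σ

theorem coeff_genFun (S : Set FinPerm) (w : FinPerm → R) (n : ℕ) :
    coeff n (genFun S w) = ∑ σ ∈ ofLength S n, w σ :=
  coeff_mk _ _

theorem genFun_diff_add_genFun (h : S' ⊆ S) (w : FinPerm → R) :
    genFun (S \ S') w + genFun S' w = genFun S w := by
  classical
  ext n
  have hsub : ofLength S' n ⊆ ofLength S n := fun σ hσ => by
    rw [mem_ofLength] at hσ ⊢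
    exact ⟨hσ.1, h hσ.2⟩
  have hdiff : ofLength (S \ S') n = ofLength S n \ ofLength S' n := by
    ext σ
    simp only [mem_sdiff, mem_ofLength, Set.mem_sdiff]
    tauto
  rw [map_add, coeff_genFun, coeff_genFun, coeff_genFun, hdiff, sum_sdiff hsub]

theorem genFun_singleton (σ : FinPerm) (w : FinPerm → R) :
    genFun {σ} w = monomial σ.length (w σ) := by
  ext n
  rw [coeff_genFun, coeff_monomial]
  split_ifs with h
  · have hσ : ofLength {σ} n = {σ} := by
      ext τ
      rw [mem_ofLength, Set.mem_singleton_iff, mem_singleton, and_iff_right_iff_imp]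
      rintro rfl
      exact h.symm
    rw [hσ, sum_singleton]
  · refine sum_eq_zero fun τ hτ => ?_
    obtain ⟨hl, rfl⟩ := mem_ofLength.1 hτ
    exact absurd hl.symm h

theorem X_mul_genFun_one {f : FinPerm → FinPerm} (hf : f.Injective)
    (hlen : ∀ σ, (f σ).length = σ.length + 1) (S : Set FinPerm) :
    X * genFun S (1 : FinPerm → R) = genFun (f '' S) 1 := by
  ext n
  rw [coeff_genFun]
  obtain _ | n := n
  · rw [coeff_zero_X_mul, eq_comm]
    refine sum_eq_zero fun τ hτ => ?_
    obtain ⟨hl, σ, -, rfl⟩ := mem_ofLength.1 hτ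
    exact absurd ((hlen σ).symm.trans hl) (Nat.succ_ne_zero _)
  · rw [coeff_succ_X_mul, coeff_genFun]
    refine sum_nbij f (fun σ hσ => ?_) hf.injOn (fun τ hτ => ?_) fun _ _ => rfl
    · obtain ⟨rfl, hσS⟩ := mem_ofLength.1 hσ
      exact mem_ofLength.2 ⟨hlen σ, σ, hσS, rfl⟩
    · obtain ⟨hl, σ, hσ, rfl⟩ := mem_ofLength.1 hτ
      exact ⟨σ, mem_ofLength.2 ⟨Nat.succ_injective ((hlen σ).symm.trans hl), hσ⟩, rfl⟩

theorem coeff_genFun_one_mul_genFun (S S' : Set FinPerm) (w : FinPerm → R) (n : ℕ) :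
    coeff n (genFun S 1 * genFun S' w) = ∑ p ∈ pairsOfLength S S' n, w p.2 := by
  rw [coeff_mul, pairsOfLength, sum_disjiUnion]
  refine sum_congr rfl fun k _ => ?_
  simp only [coeff_genFun, sum_product, Pi.one_apply, sum_const, nsmul_eq_mul, mul_one]

theorem genFun_kings_mul_genFun_blocks :
    genFun kings (1 : FinPerm → R) * genFun (kings ∩ blocks) 1 =
      genFun (kings ∩ endingInBlock) 1 := by
  ext n
  rw [coeff_genFun_one_mul_genFun, coeff_genFun]
  refine sum_nbij (fun p => p.1 * p.2) ?_ ?_ ?_ fun _ _ => rfl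
  · rintro ⟨α, μ⟩ h
    obtain ⟨hn, hα, hμ, hμb⟩ := mk_mem_pairsOfLength.1 h
    exact mem_ofLength.2 ⟨hn, (mul_mem_kings_iff_of_mem_blocks hμb).2 ⟨hα, hμ⟩, α, μ, hμb, rfl⟩
  · rintro ⟨α, μ⟩ h ⟨γ, δ⟩ h' heq
    obtain ⟨rfl, rfl⟩ := mul_inj_of_mem_blocks heq (mk_mem_pairsOfLength.1 h).2.2.2
      (mk_mem_pairsOfLength.1 h').2.2.2
    rfl
  · rintro _ h
    obtain ⟨hn, hking, α, μ, hμb, rfl⟩ := mem_ofLength.1 h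
    obtain ⟨hα, hμ⟩ := (mul_mem_kings_iff_of_mem_blocks hμb).1 hking
    exact ⟨(α, μ), mk_mem_pairsOfLength.2 ⟨hn, hα, hμ, hμb⟩, rfl⟩

theorem genFun_endingInBlock_mul_genFun_kings (f : ℕ → R) :
    genFun (kings ∩ endingInBlock) 1 * genFun kings (fun β => f #(cuts β)) =
      genFun kings fun σ => ∑ b ∈ cuts σ, f #{a ∈ cuts σ | a < b} := by
  ext n
  rw [coeff_genFun_one_mul_genFun, coeff_genFun, sum_sigma']
  refine sum_nbij (fun p => ⟨p.1 * p.2, p.2.length⟩) ?_ ?_ ?_ fun p _ => ?_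
  · rintro ⟨γ, β⟩ h
    obtain ⟨hn, ⟨hγ, hγb⟩, hβ⟩ := mk_mem_pairsOfLength.1 h
    exact mem_sigma.2 ⟨mem_ofLength.2 ⟨hn, (mul_mem_kings_iff_of_mem_endingInBlock hγb).2 ⟨hγ, hβ⟩⟩,
      mem_cuts.2 ⟨γ, hγb, β, rfl, rfl⟩⟩
  · rintro ⟨γ, β⟩ - ⟨γ', β'⟩ - heq
    obtain ⟨hmul, hlen⟩ := Sigma.mk.inj heq
    obtain ⟨rfl, rfl⟩ := mul_inj_of_length_eq hmul (eq_of_heq hlen)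
    rfl
  · rintro ⟨σ, b⟩ h
    obtain ⟨hσ, hb⟩ := mem_sigma.1 h
    obtain ⟨γ, hγb, β, rfl, rfl⟩ := mem_cuts.1 hb
    obtain ⟨hn, hking⟩ := mem_ofLength.1 hσ
    obtain ⟨hγ, hβ⟩ := (mul_mem_kings_iff_of_mem_endingInBlock hγb).1 hking
    exact ⟨(γ, β), mk_mem_pairsOfLength.2 ⟨hn, ⟨hγ, hγb⟩, hβ⟩, rfl⟩
  · simp only [filter_cuts_mul]

end Semiring

theorem genFun_kings_pow_occP {R : Type*} [CommRing R] (u : R) :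
    genFun kings (fun σ => u ^ occP σ.perm) = genFun kings 1 +
      C (u - 1) * (genFun kings 1 * genFun (kings ∩ blocks) 1 *
        genFun kings (fun σ => u ^ occP σ.perm)) := by
  simp only [occP_perm_eq_card_cuts]
  rw [genFun_kings_mul_genFun_blocks, genFun_endingInBlock_mul_genFun_kings (u ^ ·)]
  ext n
  simp only [map_add, coeff_C_mul, coeff_genFun, mul_sum, ← sum_add_distrib, Pi.one_apply]
  refine sum_congr rfl fun σ _ => ?_
  rw [← mul_sum, pow_card_eq_one_add_sum]

/-! ### Counting blocks -/

/-- The permutation `0 (σ_0 + 1) ⋯ (σ_{n-1} + 1)`. -/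
noncomputable def consMin (σ : FinPerm) : FinPerm :=
  ofFun (σ.length + 1) (fun k => if k = 0 then 0 else σ (k - 1) + 1)
    (fun k hk => by
      split_ifs
      · omega
      · have := apply_lt (σ := σ) (k := k - 1) (by omega)
        omega)
    (fun j hj k hk h => by
      have := apply_inj (σ := σ) (j := j - 1) (k := k - 1)
      simp only [Set.mem_Iio] at hj hk h
      split_ifs at h <;> omega)

theorem length_consMin (σ : FinPerm) : (consMin σ).length = σ.length + 1 := rfl

theorem consMin_zero (σ : FinPerm) : consMin σ 0 = 0 := ofFun_apply (Nat.succ_pos _)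

theorem consMin_succ (hk : k < σ.length) : consMin σ (k + 1) = σ k + 1 :=
  ofFun_apply (Nat.succ_lt_succ hk)

theorem consMin_injective : consMin.Injective := fun σ τ h => by
  have hl : σ.length = τ.length := Nat.succ_injective (congrArg length h)
  refine ext_apply hl fun k hk => Nat.add_right_cancel (m := 1) ?_
  rw [← consMin_succ hk, h, consMin_succ (hl ▸ hk)]

theorem exists_eq_consMin (hlen : 0 < σ.length) (h : σ 0 = 0) : ∃ τ, σ = consMin τ := by
  have hpos : ∀ k, k + 1 < σ.length → 0 < σ (k + 1) := fun k hk => by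
    have := apply_inj hk hlen
    omega
  let τ := ofFun (σ.length - 1) (fun k => σ (k + 1) - 1)
    (fun k hk => by
      have := apply_lt (σ := σ) (k := k + 1) (by omega)
      omega)
    (fun j hj k hk hjk => by
      simp only [Set.mem_Iio] at hj hk hjk
      have := hpos j (by omega)
      have := hpos k (by omega)
      have := apply_inj (σ := σ) (j := j + 1) (k := k + 1) (by omega) (by omega)
      omega)
  have hτ : τ.length + 1 = σ.length := Nat.sub_add_cancel hlen
  refine ⟨τ, ext_apply hτ.symm fun k hk => ?_⟩
  obtain _ | k := k
  · rw [h, consMin_zero]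
  · have hk' : k < τ.length := by omega
    rw [consMin_succ hk']
    have : τ k = σ (k + 1) - 1 := ofFun_apply hk'
    have := hpos k hk
    omega

/-- The permutation `σ_0 ⋯ σ_{n-1} n`. -/
noncomputable def snocMax (σ : FinPerm) : FinPerm :=
  ofFun (σ.length + 1) (fun k => if k < σ.length then σ k else σ.length)
    (fun k _ => by
      split_ifs with h
      · have := apply_lt h
        omega
      · omega)
    (fun j hj k hk h => by
      have := apply_inj (σ := σ) (j := j) (k := k)
      have := apply_lt (σ := σ) (k := j)
      have := apply_lt (σ := σ) (k := k)
      simp only [Set.mem_Iio] at hj hk h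
      split_ifs at h <;> omega)

theorem length_snocMax (σ : FinPerm) : (snocMax σ).length = σ.length + 1 := rfl

theorem snocMax_apply (hk : k < σ.length) : snocMax σ k = σ k :=
  (ofFun_apply (by omega)).trans (if_pos hk)

theorem snocMax_length (σ : FinPerm) : snocMax σ σ.length = σ.length :=
  (ofFun_apply (by omega)).trans (if_neg (by omega))

theorem snocMax_injective : snocMax.Injective := fun σ τ h => by
  have hl : σ.length = τ.length := Nat.succ_injective (congrArg length h)
  refine ext_apply hl fun k hk => ?_
  rw [← snocMax_apply hk, h, snocMax_apply (hl ▸ hk)]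

theorem exists_eq_snocMax (hlen : 0 < σ.length) (h : σ (σ.length - 1) = σ.length - 1) :
    ∃ τ, σ = snocMax τ := by
  have hlt : ∀ k < σ.length - 1, σ k < σ.length - 1 := fun k hk => by
    have := apply_inj (σ := σ) (j := k) (k := σ.length - 1) (by omega) (by omega)
    have := apply_lt (σ := σ) (k := k) (by omega)
    omega
  let τ := ofFun (σ.length - 1) σ hlt (σ.injOn.mono (Set.Iio_subset_Iio (by omega)))
  have hτ : τ.length + 1 = σ.length := Nat.sub_add_cancel hlen
  refine ⟨τ, ext_apply hτ.symm fun k hk => ?_⟩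
  obtain hk' | rfl := (Nat.le_of_lt_succ (hτ.symm ▸ hk : k < τ.length + 1)).lt_or_eq
  · rw [snocMax_apply hk']
    exact (ofFun_apply hk').symm
  · exact h.trans (snocMax_length τ).symm

/-- The nonempty permutations that begin with their minimum. -/
def startingWithMin : Set FinPerm := {σ | 0 < σ.length ∧ σ 0 = 0}

theorem consMin_mem_kings_iff : consMin σ ∈ kings ↔ σ ∈ kings ∧ σ ∉ startingWithMin := by
  simp only [mem_kings_iff, length_consMin, startingWithMin, Set.mem_ofPred_eq, not_and]
  constructor
  · refine fun H => ⟨fun k hk => ?_, fun hlen => ?_⟩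
    · have := H (k + 1) (by omega)
      rw [consMin_succ hk, consMin_succ (by omega)] at this
      omega
    · have := H 0 (by omega)
      rw [consMin_zero, consMin_succ hlen] at this
      omega
  · rintro ⟨hσ, hzero⟩ (_ | k) hk
    · rw [consMin_zero, consMin_succ (by omega)]
      have := hzero (by omega)
      omega
    · rw [consMin_succ (by omega), consMin_succ (by omega)]
      have := hσ k (by omega)
      omega

theorem snocMax_mem_kings_iff : snocMax σ ∈ kings ↔
    σ ∈ kings ∧ (0 < σ.length → σ (σ.length - 1) ≠ σ.length - 1) := by
  simp only [mem_kings_iff, length_snocMax]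
  constructor
  · refine fun H => ⟨fun k hk => ?_, fun hlen => ?_⟩
    · have := H k (by omega)
      rwa [snocMax_apply hk, snocMax_apply (by omega)] at this
    · obtain ⟨m, hm⟩ := Nat.exists_eq_add_of_le' hlen
      have := H m (by omega)
      rw [← hm, snocMax_length, snocMax_apply (by omega)] at this
      rw [hm, Nat.add_sub_cancel]
      omega
  · rintro ⟨hσ, hlast⟩ k hk
    obtain hk' | hk' := lt_or_eq_of_le (Nat.le_of_lt_succ hk)
    · rw [snocMax_apply hk', snocMax_apply (by omega)]
      exact hσ k hk'
    · have hlast := hlast (by omega)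
      have := apply_lt (σ := σ) (k := k) (by omega)
      rw [← hk', Nat.add_sub_cancel] at hlast
      rw [snocMax_apply (by omega), hk', snocMax_length]
      omega

/-- The permutation of length one. -/
def point : FinPerm := ⟨1, 1⟩

theorem eq_point_of_length (h : σ.length = 1) : σ = point := by
  obtain ⟨n, σ⟩ := σ
  obtain rfl : n = 1 := h
  exact congrArg _ (Subsingleton.elim _ _)

theorem image_consMin :
    consMin '' (kings \ (kings ∩ startingWithMin)) = kings ∩ startingWithMin := by
  ext σ
  constructor
  · rintro ⟨τ, ⟨hτ, hτ'⟩, rfl⟩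
    exact ⟨consMin_mem_kings_iff.2 ⟨hτ, fun h => hτ' ⟨hτ, h⟩⟩, Nat.succ_pos _, consMin_zero τ⟩
  · rintro ⟨hσ, hlen, hzero⟩
    obtain ⟨τ, rfl⟩ := exists_eq_consMin hlen hzero
    obtain ⟨hτ, hτ'⟩ := consMin_mem_kings_iff.1 hσ
    exact ⟨τ, ⟨hτ, fun h => hτ' h.2⟩, rfl⟩

theorem image_snocMax :
    snocMax '' (((kings ∩ startingWithMin) \ (kings ∩ blocks)) \ {point}) = kings ∩ blocks := by
  ext σ
  constructor
  · rintro ⟨τ, ⟨⟨⟨hτ, hpos, hzero⟩, hblock⟩, hpoint⟩, rfl⟩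
    have hlen : 1 < τ.length := lt_of_le_of_ne hpos fun h => hpoint (eq_point_of_length h.symm)
    refine ⟨snocMax_mem_kings_iff.2 ⟨hτ, fun _ h => hblock ⟨hτ, hlen, hzero, h⟩⟩,
      Nat.lt_succ_of_lt hlen, ?_, ?_⟩
    · rw [snocMax_apply hpos, hzero]
    · exact snocMax_length τ
  · rintro ⟨hσ, hlen, hzero, hlast⟩
    obtain ⟨τ, rfl⟩ := exists_eq_snocMax (by omega) hlast
    have hpos : 0 < τ.length := Nat.lt_of_succ_lt_succ hlen
    obtain ⟨hτ, hne⟩ := snocMax_mem_kings_iff.1 hσ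
    rw [snocMax_apply hpos] at hzero
    refine ⟨τ, ⟨⟨⟨hτ, hpos, hzero⟩, fun h => hne hpos h.2.2.2⟩, ?_⟩, rfl⟩
    rintro rfl
    exact hne hpos hzero

theorem point_mem_sdiff_blocks : point ∈ (kings ∩ startingWithMin) \ (kings ∩ blocks) := by
  refine ⟨⟨mem_kings_iff.2 fun k hk => ?_, Nat.one_pos, ?_⟩, fun h => lt_irrefl 1 h.2.1⟩
  · exact absurd (Nat.lt_of_succ_lt_succ hk) (Nat.not_lt_zero k)
  · exact Nat.lt_one_iff.1 (apply_lt (σ := point) Nat.one_pos)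

section CommRing

variable {R : Type*} [CommRing R]

theorem one_add_X_mul_genFun_startingWithMin :
    (1 + X) * genFun (kings ∩ startingWithMin) (1 : FinPerm → R) = X * genFun kings 1 := by
  have hdiff := genFun_diff_add_genFun Set.inter_subset_left (1 : FinPerm → R)
    (S := kings) (S' := kings ∩ startingWithMin)
  have hcons := X_mul_genFun_one (R := R) consMin_injective length_consMin
    (kings \ (kings ∩ startingWithMin))
  rw [image_consMin] at hcons
  linear_combination X * hdiff - hcons

theorem one_add_X_mul_genFun_blocks :
    (1 + X) * genFun (kings ∩ blocks) (1 : FinPerm → R) =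
      X * genFun (kings ∩ startingWithMin) 1 - X ^ 2 := by
  have hsub : kings ∩ blocks ⊆ kings ∩ startingWithMin :=
    Set.inter_subset_inter_right _ fun μ hμ => ⟨Nat.zero_lt_of_lt hμ.1, hμ.2.1⟩
  have hdiff := genFun_diff_add_genFun hsub (1 : FinPerm → R)
  have hdiff' := genFun_diff_add_genFun (Set.singleton_subset_iff.2 point_mem_sdiff_blocks)
    (1 : FinPerm → R)
  have hsnoc := X_mul_genFun_one (R := R) snocMax_injective length_snocMax
    (((kings ∩ startingWithMin) \ (kings ∩ blocks)) \ {point})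
  have hpoint : genFun {point} (1 : FinPerm → R) = X := genFun_singleton _ _
  rw [image_snocMax] at hsnoc
  linear_combination X * (hdiff + hdiff') - hsnoc - X * hpoint

theorem one_add_X_sq_mul_genFun_blocks :
    (1 + X) ^ 2 * genFun (kings ∩ blocks) (1 : FinPerm → R) =
      X ^ 2 * (genFun kings 1 - 1 - X) := by
  linear_combination (1 + X) * one_add_X_mul_genFun_blocks (R := R) +
    X * one_add_X_mul_genFun_startingWithMin (R := R)

end CommRing

/-! ### The series `kingAu` and `Etu` as generating functions -/

open Classical in
theorem genFun_kings {R : Type*} [Semiring R] (w : FinPerm → R) : genFun kings w =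
    PowerSeries.mk fun n => ∑ σ : Equiv.Perm (Fin n), if IsKing σ then w ⟨n, σ⟩ else 0 := by
  rw [genFun]
  congr 1
  ext n
  rw [ofLength, sum_filter, sum_map]
  rfl

theorem kingAu_eq_genFun : kingAu = genFun kings 1 := by
  classical
  rw [genFun_kings, kingAu]
  congr 1
  ext1 n
  simp only [kingCount, Nat.card_eq_fintype_card, Fintype.card_subtype, Pi.one_apply, sum_boole]

theorem Etu_eq_genFun : Etu = genFun kings fun σ => Polynomial.X ^ occP σ.perm := by
  rw [genFun_kings, Etu]

end FinPerm

open FinPerm PowerSeries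

theorem statement_15_general {R : Type*} [CommRing R] (u : R) :
    ((1 + X) ^ 2 + X ^ 2 * (1 - C u) * genFun kings 1 * (genFun kings 1 - 1 - X)) *
        genFun kings (fun σ => u ^ occP σ.perm) =
      (1 + X) ^ 2 * genFun kings 1 := by
  set A : R⟦X⟧ := genFun kings 1
  set B : R⟦X⟧ := genFun (kings ∩ blocks) 1
  set E : R⟦X⟧ := genFun kings fun σ => u ^ occP σ.perm
  have hE : E = A + C (u - 1) * (A * B * E) := genFun_kings_pow_occP u
  have hB : (1 + X) ^ 2 * B = X ^ 2 * (A - 1 - X) := one_add_X_sq_mul_genFun_blocks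
  rw [map_sub, map_one] at hE
  linear_combination (1 + X) ^ 2 * hE + (C u - 1) * A * E * hB

theorem statement_15 :
    ((1 + T) ^ 2 + T ^ 2 * (1 - U) * kingAu * (kingAu - 1 - T)) * Etu
      = (1 + T) ^ 2 * kingAu := by
  rw [kingAu_eq_genFun, Etu_eq_genFun]
  exact statement_15_general Polynomial.X
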